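/- Let k ≥ 5 be odd and let m ≥ 6 be even. Set c = m−2 and d = m−4 if m ≡ 0 (mod 4), and c = m−1 and d = m−2 if m ≡ 2 (mod 4). Suppose there exists an edge 2-coloring of the complete graph on n vertices with no monochromatic copy of the wheel W_m. Then there exists a Gallai k-coloring of the complete graph on 2n + 10c(5^((k−3)/2) − 1) − 2d(k−3) vertices with no monochromatic copy of W_m. Consequently GR_k(W_m) ≥ 2(R_2(W_m) + 5c(5^((k−3)/2) − 1) − d(k−3)) − 1. -/

import Mathlib

open SimpleGraph

/-- A monochromatic copy of `H` in the graph `G` edge-colored by `c`: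
an injective map sending edges of `H` to edges of `G`, all image edges of one color. -/
def IsMonoCopy {α V : Type*} {k : ℕ} (G : SimpleGraph V) (c : V → V → Fin k)
    (H : SimpleGraph α) : Prop :=
  ∃ (f : α → V) (i : Fin k), Function.Injective f ∧
    ∀ a b, H.Adj a b → G.Adj (f a) (f b) ∧ c (f a) (f b) = i

/-- The edge coloring `c` of `G` has no rainbow triangle. -/
def NoRainbowTriangle {V : Type*} {k : ℕ} (G : SimpleGraph V) (c : V → V → Fin k) : Prop :=
  ¬ ∃ x y z : V, G.Adj x y ∧ G.Adj y z ∧ G.Adj x z ∧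
    c x y ≠ c y z ∧ c y z ≠ c x z ∧ c x y ≠ c x z

/-- The Gallai–Ramsey number `GR_k(H)`: the least `N` such that every
rainbow-triangle-free `k`-edge-coloring of the complete graph on `N` vertices
contains a monochromatic copy of `H`. -/
noncomputable def GallaiRamsey (k : ℕ) {α : Type*} (H : SimpleGraph α) : ℕ :=
  sInf {N | ∀ c : Fin N → Fin N → Fin k, (∀ x y, c x y = c y x) →
    NoRainbowTriangle (⊤ : SimpleGraph (Fin N)) c →
    IsMonoCopy (⊤ : SimpleGraph (Fin N)) c H}

/-- The diagonal two-color Ramsey number `R(H, H)`. -/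
noncomputable def Ramsey2 {α : Type*} (H : SimpleGraph α) : ℕ :=
  sInf {N | ∀ c : Fin N → Fin N → Fin 2, (∀ x y, c x y = c y x) →
    IsMonoCopy (⊤ : SimpleGraph (Fin N)) c H}

/-- The fan `F_3 = K_1 + 3K_2`: vertex `0` is the center, joined to all other
vertices, together with the three disjoint edges `12`, `34`, `56`. -/
def fanF3 : SimpleGraph (Fin 7) :=
  SimpleGraph.fromRel (fun a b => a = 0 ∨ (a.val % 2 = 1 ∧ b.val = a.val + 1))

/-- The kipas `K̂_m = K_1 + P_m`: vertex `0` is the center, joined to all other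
vertices, and `1, 2, …, m` form a path. -/
def kipasG (m : ℕ) : SimpleGraph (Fin (m + 1)) :=
  SimpleGraph.fromRel (fun a b => a = 0 ∨ (1 ≤ a.val ∧ b.val = a.val + 1))

/-- The wheel `W_m = K_1 + C_m`: vertex `0` is the center, joined to all other
vertices, and `1, 2, …, m` form a cycle. -/
def wheelG (m : ℕ) : SimpleGraph (Fin (m + 1)) :=
  SimpleGraph.fromRel (fun a b =>
    a = 0 ∨ (1 ≤ a.val ∧ b.val = a.val + 1) ∨ (a.val = m ∧ b.val = 1))

/-- The star `K_{1,n}`: vertex `0` is the center, joined to all other vertices. -/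
def starG (n : ℕ) : SimpleGraph (Fin (n + 1)) :=
  SimpleGraph.fromRel (fun a _ => a = 0)

/-- `K⁺_{1,n}`, the star `K_{1,n}` with one edge subdivided: vertex `0` is joined to
`1, …, n`, and the extra vertex `n+1` is joined to `n`. -/
def starPlusG (n : ℕ) : SimpleGraph (Fin (n + 2)) :=
  SimpleGraph.fromRel (fun a b => (a = 0 ∧ b.val ≤ n) ∨ (a.val = n ∧ b.val = n + 1))

/-- The complete graph on `Fin N` with the single edge `{0, 1}` deleted. -/
def compMinusEdge (N : ℕ) : SimpleGraph (Fin N) where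
  Adj x y := x ≠ y ∧ ¬(x.val = 0 ∧ y.val = 1) ∧ ¬(x.val = 1 ∧ y.val = 0)
  symm := by
    refine ⟨?_⟩
    intro x y h
    exact ⟨h.1.symm, fun hc => h.2.2 ⟨hc.2, hc.1⟩, fun hc => h.2.1 ⟨hc.2, hc.1⟩⟩
  loopless := by refine ⟨?_⟩; intro x h; exact h.1 rfl

/-- The complete graph on `Fin M` together with one extra vertex (`none`)
joined exactly to the vertices of `A`. -/
def addVertex (M : ℕ) (A : Set (Fin M)) : SimpleGraph (Option (Fin M)) where
  Adj x y := (∃ a b : Fin M, x = some a ∧ y = some b ∧ a ≠ b) ∨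
    (∃ a ∈ A, (x = some a ∧ y = none) ∨ (x = none ∧ y = some a))
  symm := by
    refine ⟨?_⟩
    rintro x y (⟨a, b, hx, hy, hab⟩ | ⟨a, ha, (⟨hx, hy⟩ | ⟨hx, hy⟩)⟩)
    · exact Or.inl ⟨b, a, hy, hx, hab.symm⟩
    · exact Or.inr ⟨a, ha, Or.inr ⟨hy, hx⟩⟩
    · exact Or.inr ⟨a, ha, Or.inl ⟨hy, hx⟩⟩
  loopless := by
    refine ⟨?_⟩
    rintro x (⟨a, b, hx, hy, hab⟩ | ⟨a, ha, (⟨hx, hy⟩ | ⟨hx, hy⟩)⟩) <;> simp_all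

/-- The star-critical Gallai–Ramsey number `GR*_k(H)`: the least `s` such that
every rainbow-triangle-free `k`-edge-coloring of the complete graph on
`GR_k(H) - 1` vertices plus one extra vertex joined to exactly `s` of them
contains a monochromatic copy of `H`. -/
noncomputable def GRstar (k : ℕ) {α : Type*} (H : SimpleGraph α) : ℕ :=
  sInf {s | ∀ A : Finset (Fin (GallaiRamsey k H - 1)), A.card = s →
    ∀ c : Option (Fin (GallaiRamsey k H - 1)) → Option (Fin (GallaiRamsey k H - 1)) → Fin k,
      (∀ x y, c x y = c y x) →
      NoRainbowTriangle (addVertex (GallaiRamsey k H - 1) (↑A)) c →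
      IsMonoCopy (addVertex (GallaiRamsey k H - 1) (↑A)) c H}

/-- `H` is Gallai-Ramsey-full for `k` colors: the complete graph on `GR_k(H)`
vertices minus one edge admits a rainbow-triangle-free `k`-edge-coloring with
no monochromatic copy of `H`. -/
def GallaiRamseyFull (k : ℕ) {α : Type*} (H : SimpleGraph α) : Prop :=
  ∃ c : Fin (GallaiRamsey k H) → Fin (GallaiRamsey k H) → Fin k,
    (∀ x y, c x y = c y x) ∧
    NoRainbowTriangle (compMinusEdge (GallaiRamsey k H)) c ∧
    ¬ IsMonoCopy (compMinusEdge (GallaiRamsey k H)) c H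

/-- Reachability inside the vertex set `s`: there is a walk all of whose
vertices lie in `s`. -/
def ReachableWithin {V : Type*} (R : SimpleGraph V) (s : Set V) (u v : V) : Prop :=
  ∃ w : R.Walk u v, ∀ x ∈ w.support, x ∈ s

/-!
Call a colour sparse if its components have fewer than `m` vertices and its degrees are less than
`m / 2`. Substitute colourings for the vertices of a reduced colouring in which colour `b` is
triangle-free, and suppose that `b` occurs only sparsely inside the parts, and only in parts no two
of which are joined in colour `b`. Then colour `b` contains no kipas `K̂_m`, a subgraph of `W_m`.

Substitute into the colouring of `K_5` by two 5-cycles: each of its two colours may also be sparse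
inside two of the five parts. Starting from two sparse colours on `c` vertices (a circulant graph
and its complement) and substituting five equal parts `s` times gives `c * 5 ^ s` vertices with
two colours still sparse. Four such parts at every step around one sparse colour on `m / 2` vertices
give `m / 2 + c * (5 ^ s - 1)` vertices with one colour still sparse. Four parts of the latter kind
around the given 2-colouring, at each of `(k - 3) / 2` steps, use up all colours but one, and the
last colour joins two copies of the result.
-/

namespace GallaiRamsey

section SparseGraph

variable {V α : Type*} {m : ℕ}

/-- `m`-sparsity of a graph: components of fewer than `m` vertices and degrees below `m / 2`.
It keeps a colour free of `K̂_m` even after adding suitable edges between parts of a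
substitution. Sizes are `ncard`s, so the notion is meaningful on finite vertex types only. -/
structure IsSparse (m : ℕ) (G : SimpleGraph V) : Prop where
  ncard_supp_lt : ∀ C : G.ConnectedComponent, C.supp.ncard < m
  ncard_neighborSet_lt : ∀ v, (G.neighborSet v).ncard < m / 2

theorem isSparse_bot (hm : 2 ≤ m) : IsSparse m (⊥ : SimpleGraph V) where
  ncard_supp_lt C := by
    have hC : C.supp.Subsingleton := fun x hx y hy =>
      reachable_bot.1 (ConnectedComponent.exact (hx.trans hy.symm))
    have := hC.finite.to_subtype
    exact (Set.ncard_le_one_iff_subsingleton.2 hC).trans_lt hm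
  ncard_neighborSet_lt v := by
    simp only [neighborSet_bot, Set.ncard_empty]
    omega

theorem isSparse_of_card_le_half [Finite V] (hV : Nat.card V ≤ m / 2) (G : SimpleGraph V) :
    IsSparse m G where
  ncard_supp_lt C := by
    have hpos : 0 < C.supp.ncard := (Set.ncard_pos).2 C.nonempty_supp
    have := C.supp.ncard_le_card
    omega
  ncard_neighborSet_lt v :=
    (Set.ncard_lt_card ((Set.ne_univ_iff_exists_notMem _).2 ⟨v, G.irrefl⟩)).trans_le hV

theorem IsSparse.free_of_connected [Finite V] {G : SimpleGraph V} (hG : IsSparse m G)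
    {P : SimpleGraph α} (hP : P.Connected) (hcard : m ≤ Nat.card α) : P.Free G := by
  rintro ⟨f⟩
  obtain ⟨a⟩ := hP.nonempty
  have hsub : Set.range f ⊆ (G.connectedComponentMk (f a)).supp := by
    rintro _ ⟨b, rfl⟩
    exact ConnectedComponent.sound ((hP.preconnected b a).map f.toHom)
  have hrange : (Set.range f).ncard = Nat.card α := Set.ncard_range_of_injective f.injective
  exact (hcard.trans (hrange ▸ Set.ncard_le_ncard hsub)).not_gt (hG.ncard_supp_lt _)

section Circulant

variable {c w : ℕ}

theorem one_le_val_sub {u v : ZMod c} (h : u ≠ v) : 1 ≤ (u - v).val :=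
  Nat.one_le_iff_ne_zero.2 fun h0 => h (sub_eq_zero.1 ((ZMod.val_eq_zero _).1 h0))

variable [NeZero c]

theorem ncard_neighborSet_le_card (G : SimpleGraph (ZMod c)) (v : ZMod c) (A : Finset ℕ)
    (hA : ∀ u, G.Adj v u → (u - v).val ∈ A) : (G.neighborSet v).ncard ≤ A.card := by
  rw [← Set.ncard_coe_finset]
  refine Set.ncard_le_ncard_of_injOn (fun u => (u - v).val) (fun u hu => hA u hu) ?_
    A.finite_toSet
  exact fun x _ y _ h => sub_left_injective (ZMod.val_injective c h)

theorem val_sub_add_val_sub {u v : ZMod c} (h : u ≠ v) : (u - v).val + (v - u).val = c := by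
  have : NeZero (u - v) := ⟨sub_ne_zero.2 h⟩
  rw [← neg_sub u v, ZMod.val_neg_of_ne_zero]
  have := (u - v).val_lt
  omega

theorem exists_isSparse_isSparse_compl (hc : c < m) (hw : 2 * w < m / 2)
    (hw' : c ≤ m / 2 + 2 * w) : ∃ G : SimpleGraph (ZMod c), IsSparse m G ∧ IsSparse m Gᶜ := by
  have hsupp (G : SimpleGraph (ZMod c)) (C : G.ConnectedComponent) : C.supp.ncard < m :=
    C.supp.ncard_le_card.trans_lt (by rwa [Nat.card_zmod])
  refine ⟨circulantGraph {x | x.val ∈ Finset.Icc 1 w}, ⟨hsupp _, fun v => ?_⟩,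
    ⟨hsupp _, fun v => ?_⟩⟩
  · refine (ncard_neighborSet_le_card _ v (Finset.Icc 1 w ∪ Finset.Ico (c - w) c) ?_).trans_lt ?_
    · intro u hu
      have hsum := val_sub_add_val_sub hu.ne
      have hvu := one_le_val_sub hu.ne
      have huv := one_le_val_sub hu.ne'
      simp only [circulantGraph_adj, Set.mem_ofPred_eq, Finset.mem_Icc, Finset.mem_union,
        Finset.mem_Ico] at hu ⊢
      omega
    · refine (Finset.card_union_le _ _).trans_lt ?_
      simp only [Nat.card_Icc, Nat.card_Ico]
      omega
  · refine (ncard_neighborSet_le_card _ v (Finset.Ico (w + 1) (c - w)) ?_).trans_lt ?_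
    · intro u hu
      have hsum := val_sub_add_val_sub hu.ne
      have hvu := one_le_val_sub hu.ne
      have huv := one_le_val_sub hu.ne'
      obtain ⟨hne, hu⟩ := (compl_adj _ _ _).1 hu
      simp only [circulantGraph_adj, Set.mem_ofPred_eq, Finset.mem_Icc, Finset.mem_Ico, hne,
        not_false_eq_true, true_and] at hu ⊢
      omega
    · rw [Nat.card_Ico]
      omega

end Circulant

end SparseGraph

section Kipas

variable {V : Type*} {m : ℕ}

theorem cliqueFree_comap {W : Type*} {G : SimpleGraph W} {r : ℕ} (f : V → W)
    (hG : G.CliqueFree r) : (G.comap f).CliqueFree r := by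
  contrapose hG
  rw [not_cliqueFree_iff_top_isContained] at hG ⊢
  obtain ⟨e⟩ := hG
  let e' := (Hom.comap f G).comp e.toHom
  exact ⟨⟨e', e'.injective_of_top_hom⟩⟩

theorem kipasG_adj_zero_succ (j : Fin m) : (kipasG m).Adj 0 j.succ := by
  simp [kipasG, (Fin.succ_ne_zero j).symm]

theorem kipasG_adj_succ_succ {i j : Fin m} (h : (pathGraph m).Adj i j) :
    (kipasG m).Adj i.succ j.succ := by
  rw [pathGraph_adj] at h
  simp only [kipasG, fromRel_adj, Fin.val_succ, ne_eq, Fin.ext_iff]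
  omega

theorem exists_copy_pathGraph_of_kipasG_isContained {G : SimpleGraph V} (h : kipasG m ⊑ G) :
    ∃ (v : V) (x : Copy (pathGraph m) G), ∀ j, G.Adj v (x j) := by
  obtain ⟨f⟩ := h
  exact ⟨f 0, ⟨⟨fun j => f j.succ, fun hij => f.toHom.map_adj (kipasG_adj_succ_succ hij)⟩,
    f.injective.comp (Fin.succ_injective m)⟩, fun j => f.toHom.map_adj (kipasG_adj_zero_succ j)⟩

theorem half_le_card_filter_range (P : ℕ → Prop) [DecidablePred P] :
    ∀ m : ℕ, (∀ j, j + 1 < m → P j ∨ P (j + 1)) → m / 2 ≤ ((Finset.range m).filter P).card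
  | 0, _ | 1, _ => by simp
  | m + 2, h => by
    have ih := half_le_card_filter_range P m fun j hj => h j (by omega)
    obtain ⟨j, hmj, hjm, hj⟩ : ∃ j, m ≤ j ∧ j < m + 2 ∧ P j :=
      (h m (by omega)).elim (⟨m, by omega, by omega, ·⟩) (⟨m + 1, by omega, by omega, ·⟩)
    have hsub : insert j ((Finset.range m).filter P) ⊆ (Finset.range (m + 2)).filter P := by grind
    have hle := Finset.card_le_card hsub
    rw [Finset.card_insert_of_notMem (by grind)] at hle
    omega

theorem half_le_ncard_of_forall_pathGraph_adj {P : Fin m → Prop}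
    (hP : ∀ i j, (pathGraph m).Adj i j → P i ∨ P j) : m / 2 ≤ {j | P j}.ncard := by
  classical
  let Q (n : ℕ) : Prop := ∃ h : n < m, P ⟨n, h⟩
  have hQ := half_le_card_filter_range Q m fun j hj =>
    (hP ⟨j, by omega⟩ ⟨j + 1, hj⟩ (by simp [pathGraph_adj])).imp (⟨_, ·⟩) (⟨_, ·⟩)
  refine hQ.trans ?_
  rw [← Set.ncard_image_of_injective _ Fin.val_injective, ← Set.ncard_coe_finset]
  refine Set.ncard_le_ncard fun n hn => ?_
  obtain ⟨-, h, hn⟩ := Finset.mem_filter.1 hn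
  exact ⟨⟨n, h⟩, hn, rfl⟩

/- Let `v` be the hub of a copy of `K̂_m`. If `v` meets an edge of `D`, then two adjacent rim
vertices cannot both be joined to `v` in `T`, so at least half of the rim lies in the
`D`-neighbourhood of `v`. Otherwise the whole rim lies in the `T`-neighbourhood of `v`, where all
edges are `D`-edges, so it is contained in one component of `D`. -/
theorem kipasG_free_sup [Finite V] {T D : SimpleGraph V} (hm : 0 < m) (hT : T.CliqueFree 3)
    (hD : IsSparse m D) (hTD : T.IsIndepSet D.support) : (kipasG m).Free (T ⊔ D) := by
  classical
  intro h
  obtain ⟨v, x, hvx⟩ := exists_copy_pathGraph_of_kipasG_isContained h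
  have hrim {i j} (hij : (pathGraph m).Adj i j) (hi : T.Adj v (x i)) (hj : T.Adj v (x j)) :
      D.Adj (x i) (x j) :=
    (x.toHom.map_adj hij).resolve_left fun hxx => hT _ (is3Clique_triple_iff.2 ⟨hi, hj, hxx⟩)
  by_cases hv : v ∈ D.support
  · have hcover : ∀ i j, (pathGraph m).Adj i j → D.Adj v (x i) ∨ D.Adj v (x j) := by
      intro i j hij
      by_contra! hne
      have hi := (hvx i).resolve_right hne.1
      have hj := (hvx j).resolve_right hne.2
      exact hTD hv ⟨_, hrim hij hi hj⟩ hi.ne hi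
    have hle : {j | D.Adj v (x j)}.ncard ≤ (D.neighborSet v).ncard :=
      Set.ncard_le_ncard_of_injOn x (fun _ hj => hj) x.injective.injOn
    exact absurd (hD.ncard_neighborSet_lt v)
      ((half_le_ncard_of_forall_pathGraph_adj hcover).trans hle).not_gt
  · have hvT (j) : T.Adj v (x j) := (hvx j).resolve_right fun h => hv ⟨_, h⟩
    obtain ⟨n, rfl⟩ := Nat.exists_eq_add_of_lt hm
    refine hD.free_of_connected (P := pathGraph (0 + n + 1)) (pathGraph_connected _) (by simp) ?_
    exact ⟨⟨⟨x, fun hij => hrim hij (hvT _) (hvT _)⟩, x.injective⟩⟩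

end Kipas

section DisjointUnion

variable {I α : Type*} {V : I → Type*} {G : ∀ i, SimpleGraph (V i)} {m : ℕ}

/-- The disjoint union of a family of graphs. -/
def disjointUnion (G : ∀ i, SimpleGraph (V i)) : SimpleGraph (Σ i, V i) :=
  ⨆ i, (G i).map (Function.Embedding.sigmaMk i)

theorem disjointUnion_adj {p q : Σ i, V i} :
    (disjointUnion G).Adj p q ↔ ∃ i x y, (G i).Adj x y ∧ ⟨i, x⟩ = p ∧ ⟨i, y⟩ = q := by
  simp [disjointUnion]

theorem disjointUnion_adj_mk {i : I} {x y : V i} :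
    (disjointUnion G).Adj ⟨i, x⟩ ⟨i, y⟩ ↔ (G i).Adj x y := by
  rw [disjointUnion_adj]
  constructor
  · rintro ⟨j, x', y', h, hx, hy⟩
    cases hx
    cases hy
    exact h
  · exact fun h => ⟨i, x, y, h, rfl, rfl⟩

theorem not_disjointUnion_adj_mk {i j : I} (hij : i ≠ j) (x : V i) (y : V j) :
    ¬ (disjointUnion G).Adj ⟨i, x⟩ ⟨j, y⟩ := by
  rw [disjointUnion_adj]
  rintro ⟨l, x', y', -, hx, hy⟩
  exact hij ((congrArg Sigma.fst hx).symm.trans (congrArg Sigma.fst hy))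

theorem disjointUnion_bot : disjointUnion (fun i => (⊥ : SimpleGraph (V i))) = ⊥ := by
  ext p q
  simp [disjointUnion_adj]

theorem exists_reachable_of_reachable_disjointUnion {i : I} {x : V i} {p : Σ i, V i}
    (h : (disjointUnion G).Reachable ⟨i, x⟩ p) : ∃ y, p = ⟨i, y⟩ ∧ (G i).Reachable x y := by
  rw [reachable_iff_reflTransGen] at h
  induction h with
  | refl => exact ⟨x, rfl, .rfl⟩
  | tail _ hadj ih =>
    obtain ⟨y, rfl, hxy⟩ := ih
    obtain ⟨j, y', z, hyz, hy, rfl⟩ := disjointUnion_adj.1 hadj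
    cases hy
    exact ⟨z, rfl, hxy.trans hyz.reachable⟩

theorem isSparse_disjointUnion [∀ i, Finite (V i)] (hG : ∀ i, IsSparse m (G i)) :
    IsSparse m (disjointUnion G) where
  ncard_supp_lt C := by
    induction C using ConnectedComponent.ind with | h p =>
    obtain ⟨i, x⟩ := p
    have hsub : ((disjointUnion G).connectedComponentMk ⟨i, x⟩).supp ⊆
        Sigma.mk i '' ((G i).connectedComponentMk x).supp := by
      intro q hq
      obtain ⟨y, rfl, hxy⟩ :=
        exists_reachable_of_reachable_disjointUnion (ConnectedComponent.exact hq).symm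
      exact ⟨y, ConnectedComponent.sound hxy.symm, rfl⟩
    exact (Set.ncard_le_ncard hsub (Set.toFinite _)).trans_lt
      ((Set.ncard_image_le (Set.toFinite _)).trans_lt ((hG i).ncard_supp_lt _))
  ncard_neighborSet_lt := by
    rintro ⟨i, x⟩
    have hsub : (disjointUnion G).neighborSet ⟨i, x⟩ ⊆ Sigma.mk i '' (G i).neighborSet x := by
      intro q hq
      obtain ⟨j, x', y, hxy, hx, rfl⟩ := disjointUnion_adj.1 hq
      cases hx
      exact ⟨y, hxy, rfl⟩
    exact (Set.ncard_le_ncard hsub (Set.toFinite _)).trans_lt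
      ((Set.ncard_image_le (Set.toFinite _)).trans_lt ((hG i).ncard_neighborSet_lt x))

theorem free_disjointUnion {H : SimpleGraph α} (hH : H.Connected) (hG : ∀ i, H.Free (G i)) :
    H.Free (disjointUnion G) := by
  rintro ⟨f⟩
  obtain ⟨a⟩ := hH.nonempty
  rcases hfa : f a with ⟨i, x⟩
  have hpart (b : α) : ∃ y, f b = ⟨i, y⟩ := by
    have hab := (hH.preconnected a b).map f.toHom
    obtain ⟨y, hy, -⟩ := exists_reachable_of_reachable_disjointUnion (hfa ▸ hab)
    exact ⟨y, hy⟩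
  choose y hy using hpart
  refine hG i ⟨⟨⟨y, fun {b c} hbc => ?_⟩, fun b c hbc => ?_⟩⟩
  · have := f.toHom.map_adj hbc
    rwa [Copy.toHom_apply, Copy.toHom_apply, hy, hy, disjointUnion_adj_mk] at this
  · exact f.injective ((hy b).trans ((congrArg _ hbc).trans (hy c).symm))

end DisjointUnion

section Coloring

variable {V W I K : Type*} {k : ℕ}

/-- The graph formed by the edges of colour `i`. -/
def colorClass (χ : V → V → K) (i : K) : SimpleGraph V :=
  fromRel fun x y => χ x y = i

/-- Gallai colourings of the complete graph on `V`. -/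
structure IsGallaiColoring (χ : V → V → Fin k) : Prop where
  symm : ∀ x y, χ x y = χ y x
  noRainbowTriangle : NoRainbowTriangle ⊤ χ

theorem colorClass_adj {χ : V → V → K} (hχ : ∀ x y, χ x y = χ y x) {i : K} {x y : V} :
    (colorClass χ i).Adj x y ↔ x ≠ y ∧ χ x y = i := by
  simp [colorClass, hχ y x]

theorem colorClass_eq_bot {χ : V → V → K} {i : K} (h : ∀ x y, x ≠ y → χ x y ≠ i) :
    colorClass χ i = ⊥ := by
  ext x y
  simpa [colorClass] using fun hxy => ⟨h x y hxy, h y x (Ne.symm hxy)⟩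

theorem isMonoCopy_top_iff {α : Type*} {χ : V → V → Fin k} (hχ : ∀ x y, χ x y = χ y x)
    {H : SimpleGraph α} : IsMonoCopy ⊤ χ H ↔ ∃ i, H ⊑ colorClass χ i := by
  constructor
  · rintro ⟨f, i, hf, h⟩
    exact ⟨i, ⟨⟨⟨f, fun hab => (colorClass_adj hχ).2 (h _ _ hab)⟩, hf⟩⟩⟩
  · rintro ⟨i, ⟨f⟩⟩
    exact ⟨f, i, f.injective, fun a b hab => (colorClass_adj hχ).1 (f.toHom.map_adj hab)⟩

theorem colorClass_comap (χ : V → V → K) (f : W ↪ V) (i : K) :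
    colorClass (fun x y => χ (f x) (f y)) i = (colorClass χ i).comap f := by
  ext x y
  simp [colorClass]

theorem IsGallaiColoring.comap {χ : V → V → Fin k} (hχ : IsGallaiColoring χ) (f : W ↪ V) :
    IsGallaiColoring fun x y => χ (f x) (f y) where
  symm _ _ := hχ.symm _ _
  noRainbowTriangle := fun ⟨x, y, z, hxy, hyz, hxz, h⟩ => hχ.noRainbowTriangle
    ⟨f x, f y, f z, f.injective.ne hxy, f.injective.ne hyz, f.injective.ne hxz, h⟩

open Classical in
/-- The colouring with the edges of `G` in colour `a` and all others in colour `b`. -/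
noncomputable def twoColoring (G : SimpleGraph V) (a b : K) (x y : V) : K :=
  if G.Adj x y then a else b

theorem twoColoring_mem (G : SimpleGraph V) (a b : K) (x y : V) :
    twoColoring G a b x y = a ∨ twoColoring G a b x y = b := by
  unfold twoColoring
  split_ifs <;> simp

theorem isGallaiColoring_twoColoring (G : SimpleGraph V) (a b : Fin k) :
    IsGallaiColoring (twoColoring G a b) where
  symm x y := by
    classical exact if_congr (G.adj_comm x y) rfl rfl
  noRainbowTriangle := by
    rintro ⟨x, y, z, -, -, -, h⟩
    grind [twoColoring_mem G a b x y, twoColoring_mem G a b y z, twoColoring_mem G a b x z]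

theorem colorClass_twoColoring_left {a b : K} (hab : a ≠ b) (G : SimpleGraph V) :
    colorClass (twoColoring G a b) a = G := by
  ext x y
  simpa [colorClass, twoColoring, hab.symm, G.adj_comm y x] using G.ne_of_adj

theorem colorClass_twoColoring_right {a b : K} (hab : a ≠ b) (G : SimpleGraph V) :
    colorClass (twoColoring G a b) b = Gᶜ := by
  ext x y
  simp [colorClass, twoColoring, hab, G.adj_comm y x]

theorem colorClass_twoColoring_of_ne {a b c : K} (hca : c ≠ a) (hcb : c ≠ b) (G : SimpleGraph V) :
    colorClass (twoColoring G a b) c = ⊥ :=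
  colorClass_eq_bot fun x y _ h =>
    (twoColoring_mem G a b x y).elim (fun ha => hca (h ▸ ha)) (fun hb => hcb (h ▸ hb))

open Classical in
/-- Substitution of the colourings `χ i` for the vertices `i` of the reduced colouring `ρ`. -/
noncomputable def substitute {V : I → Type*} (ρ : I → I → K) (χ : ∀ i, V i → V i → K)
    (p q : Σ i, V i) : K :=
  if h : p.1 = q.1 then χ q.1 (h ▸ p.2) q.2 else ρ p.1 q.1

section Substitute

variable {V : I → Type*}

theorem substitute_mk_same (ρ : I → I → K) (χ : ∀ i, V i → V i → K) (i : I) (x y : V i) :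
    substitute ρ χ ⟨i, x⟩ ⟨i, y⟩ = χ i x y :=
  dif_pos rfl

theorem substitute_mk_of_ne (ρ : I → I → K) (χ : ∀ i, V i → V i → K) {i j : I} (h : i ≠ j)
    (x : V i) (y : V j) : substitute ρ χ ⟨i, x⟩ ⟨j, y⟩ = ρ i j :=
  dif_neg h

theorem colorClass_substitute (ρ : I → I → K) (χ : ∀ i, V i → V i → K) (c : K) :
    colorClass (substitute ρ χ) c =
      (colorClass ρ c).comap Sigma.fst ⊔ disjointUnion fun i => colorClass (χ i) c := by
  ext ⟨i, x⟩ ⟨j, y⟩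
  obtain rfl | hij := eq_or_ne i j
  · simp [colorClass, substitute_mk_same, disjointUnion_adj_mk]
  · simp [colorClass, substitute_mk_of_ne, not_disjointUnion_adj_mk, hij, hij.symm]

theorem kipasG_free_colorClass_substitute [Finite I] [∀ i, Finite (V i)] {m : ℕ} {b : K}
    {ρ : I → I → K} {χ : ∀ i, V i → V i → K} (hm : 0 < m) (hρ : (colorClass ρ b).CliqueFree 3)
    (hχ : ∀ i, IsSparse m (colorClass (χ i) b))
    (hρχ : (colorClass ρ b).IsIndepSet {i | colorClass (χ i) b ≠ ⊥}) :
    (kipasG m).Free (colorClass (substitute ρ χ) b) := by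
  rw [colorClass_substitute]
  refine kipasG_free_sup hm (cliqueFree_comap Sigma.fst hρ) (isSparse_disjointUnion hχ) ?_
  have hsupp {p} (hp : p ∈ (disjointUnion fun i => colorClass (χ i) b).support) :
      colorClass (χ p.1) b ≠ ⊥ := by
    obtain ⟨q, hpq⟩ := hp
    obtain ⟨i, x, y, hxy, rfl, -⟩ := disjointUnion_adj.1 hpq
    exact ne_bot_iff_exists_adj.2 ⟨x, y, hxy⟩
  intro p hp q hq _ hpq
  rw [comap_adj] at hpq
  exact hρχ (hsupp hp) (hsupp hq) hpq.ne hpq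

theorem isGallaiColoring_substitute {ρ : I → I → Fin k} (hρ : IsGallaiColoring ρ)
    {χ : ∀ i, V i → V i → Fin k} (hχ : ∀ i, IsGallaiColoring (χ i)) :
    IsGallaiColoring (substitute ρ χ) where
  symm := by
    rintro ⟨i, x⟩ ⟨j, y⟩
    obtain rfl | hij := eq_or_ne i j
    · simp only [substitute_mk_same, (hχ i).symm x y]
    · simp only [substitute_mk_of_ne, hij, hij.symm, ne_eq, not_false_eq_true, hρ.symm i j]
  noRainbowTriangle := by
    rintro ⟨⟨i, x⟩, ⟨j, y⟩, ⟨l, z⟩, hxy, hyz, hxz, h⟩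
    obtain rfl | hij := eq_or_ne i j
    · obtain rfl | hil := eq_or_ne i l
      · simp only [substitute_mk_same, top_adj, ne_eq, Sigma.mk.injEq, heq_eq_eq, true_and] at *
        exact (hχ i).noRainbowTriangle ⟨x, y, z, hxy, hyz, hxz, h⟩
      · simp [substitute_mk_of_ne, hil] at h
    · obtain rfl | hjl := eq_or_ne j l
      · simp [substitute_mk_of_ne, hij] at h
      · obtain rfl | hil := eq_or_ne i l
        · simp [substitute_mk_of_ne, hij, hij.symm, hρ.symm i j] at h
        · simp only [substitute_mk_of_ne, hij, hjl, hil, ne_eq, not_false_eq_true] at h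
          exact hρ.noRainbowTriangle ⟨i, j, l, hij, hjl, hil, h⟩

end Substitute

end Coloring

section Realizable

variable {α : Type*} {H : SimpleGraph α} {k m n : ℕ} {F S : Finset (Fin k)}

/-- Some Gallai colouring of the complete graph on `N` vertices uses only the colours in `F ∪ S`,
has no copy of `H` in the colours of `F`, and is `m`-sparse in the colours of `S`. The construction
enlarges such colourings by substitution, with the sparse colours still available for further
steps. -/
def IsRealizable (H : SimpleGraph α) (m : ℕ) (F S : Finset (Fin k)) (N : ℕ) : Prop :=
  ∃ (V : Type) (_ : Fintype V) (χ : V → V → Fin k), IsGallaiColoring χ ∧ Fintype.card V = N ∧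
    (∀ i ∈ F, H.Free (colorClass χ i)) ∧ (∀ i ∈ S, IsSparse m (colorClass χ i)) ∧
    ∀ i ∉ F ∪ S, colorClass χ i = ⊥

theorem IsRealizable.mono_sparse (hm : 2 ≤ m) {S' : Finset (Fin k)} (h : IsRealizable H m F S n)
    (hS : S ⊆ S') (hF : Disjoint F S') : IsRealizable H m F S' n := by
  obtain ⟨V, _, χ, hχ, hcard, hfree, hsparse, hbot⟩ := h
  refine ⟨V, _, χ, hχ, hcard, hfree, fun i hi => ?_, fun i hi => hbot i ?_⟩
  · by_cases hiS : i ∈ S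
    · exact hsparse i hiS
    · rw [hbot i (by simp [hiS, Finset.disjoint_right.1 hF hi])]
      exact isSparse_bot hm
  · exact fun h => hi (Finset.union_subset_union_right hS h)

theorem IsRealizable.substitute {I : Type} [Fintype I] {ρ : I → I → Fin k} {B : Finset (Fin k)}
    {T : I → Finset (Fin k)} {N : I → ℕ} (hH : H.Connected) (hmH : kipasG m ⊑ H) (hm : 2 ≤ m)
    (hρ : IsGallaiColoring ρ) (hρB : ∀ i j, i ≠ j → ρ i j ∈ B)
    (hB : Disjoint B (F ∪ S)) (hTB : ∀ i, T i ⊆ B)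
    (hρ3 : ∀ b ∈ B, (colorClass ρ b).CliqueFree 3)
    (hρT : ∀ b ∈ B, (colorClass ρ b).IsIndepSet {i | b ∈ T i})
    (hN : ∀ i, IsRealizable H m F (S ∪ T i) (N i)) :
    IsRealizable H m (F ∪ B) S (∑ i, N i) := by
  choose V _ χ hχ hcard hfree hsparse hbot using hN
  have hρbot {c} (hc : c ∉ B) : colorClass ρ c = ⊥ :=
    colorClass_eq_bot fun i j hij h => hc (h ▸ hρB i j hij)
  have hχbot {c} (hc : c ∈ B) {i} (hci : c ∉ T i) : colorClass (χ i) c = ⊥ :=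
    hbot i c (by grind [Finset.disjoint_left])
  refine ⟨Σ i, V i, inferInstance, GallaiRamsey.substitute ρ χ,
    isGallaiColoring_substitute hρ hχ, by simp [hcard], fun c hc => ?_, fun c hc => ?_,
    fun c hc => ?_⟩
  · by_cases hcB : c ∈ B
    · refine fun h => kipasG_free_colorClass_substitute (by omega) (hρ3 c hcB) (fun i => ?_) ?_
        (hmH.trans h)
      · by_cases hci : c ∈ T i
        · exact hsparse i c (Finset.mem_union_right _ hci)
        · exact hχbot hcB hci ▸ isSparse_bot hm
      · exact (hρT c hcB).mono fun i hi => not_imp_comm.1 (hχbot hcB) hi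
    · rw [colorClass_substitute, hρbot hcB, comap_bot, bot_sup_eq]
      exact free_disjointUnion hH fun i => hfree i c (by simpa [hcB] using hc)
  · rw [colorClass_substitute, hρbot (Finset.disjoint_right.1 hB (Finset.mem_union_right _ hc)),
      comap_bot, bot_sup_eq]
    exact isSparse_disjointUnion fun i => hsparse i c (Finset.mem_union_left _ hc)
  · have hcB : c ∉ B := by grind
    have hbotc (i) : colorClass (χ i) c = ⊥ := hbot i c (by grind)
    rw [colorClass_substitute, hρbot hcB, comap_bot, bot_sup_eq]
    simp only [hbotc, disjointUnion_bot]

theorem cycleGraph_five_cliqueFree_three : (cycleGraph 5).CliqueFree 3 := by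
  intro t ht
  obtain ⟨x, y, z, hxy, hxz, hyz, -⟩ := is3Clique_iff.1 ht
  revert x y z
  decide

theorem cycleGraph_five_indepSetFree_three : (cycleGraph 5).IndepSetFree 3 := by
  rw [← cliqueFree_compl]
  intro t ht
  obtain ⟨x, y, z, hxy, hxz, hyz, -⟩ := is3Clique_iff.1 ht
  revert x y z
  decide

/- The reduced graph is the pentagon coloured by `a` and its complement coloured by `b`. Colour `a`
may also occur sparsely inside the parts at its vertices `1` and `4`, and `b` inside those at `2`
and `3`, since these pairs are non-adjacent in the respective colour. -/
theorem IsRealizable.pentagon {a b : Fin k} {N₀ N₁ N₂ : ℕ} (hH : H.Connected)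
    (hmH : kipasG m ⊑ H) (hm : 2 ≤ m) (hab : a ≠ b) (ha : a ∉ F ∪ S) (hb : b ∉ F ∪ S)
    (h₀ : IsRealizable H m F S N₀) (h₁ : IsRealizable H m F (insert a S) N₁)
    (h₂ : IsRealizable H m F (insert b S) N₂) :
    IsRealizable H m (insert a (insert b F)) S (N₀ + 2 * N₁ + 2 * N₂) := by
  let ρ := twoColoring (cycleGraph 5) a b
  let T : Fin 5 → Finset (Fin k) := ![∅, {a}, {b}, {b}, {a}]
  have hρa : colorClass ρ a = cycleGraph 5 := colorClass_twoColoring_left hab _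
  have hρb : colorClass ρ b = (cycleGraph 5)ᶜ := colorClass_twoColoring_right hab _
  have hN (i : Fin 5) : IsRealizable H m F (S ∪ T i) (![N₀, N₁, N₂, N₂, N₁] i) := by
    fin_cases i <;> simpa [T, Finset.union_comm S]
  have key := IsRealizable.substitute (ρ := ρ) (B := {a, b}) hH hmH hm
    (isGallaiColoring_twoColoring _ a b) (fun i j _ => by simp [ρ, twoColoring_mem])
    (by simp_all) (fun i => by fin_cases i <;> simp [T]) ?_ ?_ hN
  · convert key using 1
    · grind
    · simp only [Fin.sum_univ_five, Matrix.cons_val]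
      ring
  · simp [hρa, hρb, cycleGraph_five_cliqueFree_three, cycleGraph_five_indepSetFree_three]
  · have hTa (i : Fin 5) : a ∈ T i ↔ i = 1 ∨ i = 4 := by fin_cases i <;> simp [T, hab]
    have hTb (i : Fin 5) : b ∈ T i ↔ i = 2 ∨ i = 3 := by fin_cases i <;> simp [T, hab.symm]
    simp only [Finset.forall_mem_insert, Finset.mem_singleton, forall_eq, hρa, hρb, hTa, hTb,
      IsIndepSet, Set.Pairwise, Set.mem_ofPred_eq]
    decide

theorem IsRealizable.double {a : Fin k} (hH : H.Connected) (hmH : kipasG m ⊑ H) (hm : 2 ≤ m)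
    (ha : a ∉ F ∪ S) (h : IsRealizable H m F S n) : IsRealizable H m (insert a F) S (2 * n) := by
  have hρ : colorClass (fun _ _ : Bool => a) a = ⊤ := by
    ext
    simp [colorClass]
  have key := IsRealizable.substitute (I := Bool) (ρ := fun _ _ => a) (B := {a}) (T := fun _ => ∅)
    (N := fun _ => n) hH hmH hm ⟨fun _ _ => rfl, by simp [NoRainbowTriangle]⟩ (by simp)
    (by simpa using ha) (by simp) ?_ (by simp) (by simpa using h)
  · simpa [Finset.union_comm F] using key
  · simp only [Finset.mem_singleton, forall_eq, hρ]
    exact cliqueFree_of_card_lt (by simp)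

section TwoColoring

variable {V : Type} [Fintype V] {G : SimpleGraph V} {p q : Fin k}

theorem isRealizable_of_free_compl (hpq : p ≠ q) (hG : H.Free G) (hG' : H.Free Gᶜ) :
    IsRealizable H m {p, q} ∅ (Fintype.card V) := by
  refine ⟨V, _, twoColoring G p q, isGallaiColoring_twoColoring .., rfl, ?_, by simp,
    fun i hi => ?_⟩
  · simp only [Finset.forall_mem_insert, Finset.mem_singleton, forall_eq,
      colorClass_twoColoring_left hpq, colorClass_twoColoring_right hpq]
    exact ⟨hG, hG'⟩
  · exact colorClass_twoColoring_of_ne (by grind) (by grind) G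

theorem isRealizable_of_isSparse_compl (hpq : p ≠ q) (hG : IsSparse m G) (hG' : IsSparse m Gᶜ) :
    IsRealizable H m ∅ {p, q} (Fintype.card V) := by
  refine ⟨V, _, twoColoring G p q, isGallaiColoring_twoColoring .., rfl, by simp, ?_,
    fun i hi => ?_⟩
  · simp [colorClass_twoColoring_left hpq, colorClass_twoColoring_right hpq, hG, hG']
  · exact colorClass_twoColoring_of_ne (by grind) (by grind) G

end TwoColoring

theorem isRealizable_singleton_half (p : Fin k) : IsRealizable H m ∅ {p} (m / 2) := by
  refine ⟨Fin (m / 2), inferInstance, fun _ _ => p, ⟨fun _ _ => rfl, by simp [NoRainbowTriangle]⟩,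
    by simp, by simp, ?_, fun i hi => colorClass_eq_bot (by grind)⟩
  simp only [Finset.mem_singleton, forall_eq]
  exact isSparse_of_card_le_half (by simp) _

theorem exists_eq_insert_insert {ι : Type*} [DecidableEq ι] {F : Finset ι} {s : ℕ}
    (hF : F.card = 2 * (s + 1)) :
    ∃ a b F', a ≠ b ∧ a ∉ F' ∧ b ∉ F' ∧ F'.card = 2 * s ∧ F = insert a (insert b F') := by
  obtain ⟨a, F₁, ha, rfl, hF₁⟩ := Finset.card_eq_succ.1 hF
  obtain ⟨b, F', hb, rfl, hF'⟩ := Finset.card_eq_succ.1 hF₁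
  grind

theorem isRealizable_pair {c s : ℕ} (hH : H.Connected) (hmH : kipasG m ⊑ H) (hm : 2 ≤ m)
    (hc : ∀ p q : Fin k, p ≠ q → IsRealizable H m ∅ {p, q} c) (hF : F.card = 2 * s) {p q : Fin k}
    (hpq : p ≠ q) (hp : p ∉ F) (hq : q ∉ F) : IsRealizable H m F {p, q} (c * 5 ^ s) := by
  induction s generalizing F with
  | zero =>
    obtain rfl := Finset.card_eq_zero.1 hF
    simpa using hc p q hpq
  | succ s ih =>
    obtain ⟨a, b, F, hab, ha, hb, hcard, rfl⟩ := exists_eq_insert_insert hF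
    simp only [Finset.mem_insert, not_or] at hp hq
    have h := ih hcard hp.2.2 hq.2.2
    have h' {e} (he : e ∉ F) : IsRealizable H m F (insert e {p, q}) (c * 5 ^ s) :=
      h.mono_sparse hm (Finset.subset_insert _ _) (by simp [hp.2.2, hq.2.2, he])
    convert h.pentagon hH hmH hm hab (by grind) (by grind) (h' ha) (h' hb) using 1
    ring

theorem isRealizable_singleton {c s : ℕ} (hH : H.Connected) (hmH : kipasG m ⊑ H) (hm : 2 ≤ m)
    (hc : ∀ p q : Fin k, p ≠ q → IsRealizable H m ∅ {p, q} c) (hF : F.card = 2 * s) {p : Fin k}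
    (hp : p ∉ F) : IsRealizable H m F {p} (m / 2 + c * (5 ^ s - 1)) := by
  induction s generalizing F with
  | zero =>
    obtain rfl := Finset.card_eq_zero.1 hF
    simpa using isRealizable_singleton_half p
  | succ s ih =>
    obtain ⟨a, b, F, hab, ha, hb, hcard, rfl⟩ := exists_eq_insert_insert hF
    simp only [Finset.mem_insert, not_or] at hp
    have h {e} (hep : e ≠ p) (he : e ∉ F) : IsRealizable H m F {e, p} (c * 5 ^ s) :=
      isRealizable_pair hH hmH hm hc hcard hep he hp.2.2
    convert (ih hcard hp.2.2).pentagon hH hmH hm hab (by grind) (by grind)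
      (h (Ne.symm hp.1) ha) (h (Ne.symm hp.2.1) hb) using 1
    obtain ⟨u, hu⟩ := Nat.exists_eq_add_of_lt (Nat.pow_pos (n := s) (show 0 < 5 by simp))
    rw [pow_succ, hu, show (0 + u + 1) * 5 - 1 = 5 * u + 4 by omega, Nat.add_sub_cancel]
    ring

theorem exists_isRealizable_add_eq {c d t : ℕ} (hH : H.Connected) (hmH : kipasG m ⊑ H) (hm : 2 ≤ m)
    (hc : ∀ p q : Fin k, p ≠ q → IsRealizable H m ∅ {p, q} c)
    (hn : ∀ p q : Fin k, p ≠ q → IsRealizable H m {p, q} ∅ n) (hm2 : Even m) (hcd : m + d = 2 * c)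
    (hF : F.card = 2 * (t + 1)) :
    ∃ N, N + 2 * d * t = n + 5 * c * (5 ^ t - 1) ∧ IsRealizable H m F ∅ N := by
  induction t generalizing F with
  | zero =>
    obtain ⟨p, q, hpq, rfl⟩ := Finset.card_eq_two.1 hF
    exact ⟨n, by simp, hn p q hpq⟩
  | succ t ih =>
    obtain ⟨a, b, F, hab, ha, hb, hcard, rfl⟩ := exists_eq_insert_insert hF
    obtain ⟨N, hN, h⟩ := ih hcard
    have h' {e} (he : e ∉ F) := isRealizable_singleton hH hmH hm hc hcard he
    refine ⟨_, ?_, h.pentagon hH hmH hm hab (by simpa) (by simpa) (h' ha) (h' hb)⟩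
    obtain ⟨u, hu⟩ := Nat.exists_eq_add_of_lt (Nat.pow_pos (n := t) (show 0 < 5 by simp))
    obtain ⟨l, rfl⟩ := hm2
    rw [hu, Nat.add_sub_cancel] at hN
    rw [pow_succ, hu, show (0 + u + 1) * 5 - 1 = 5 * u + 4 by omega, show (l + l) / 2 = l by omega]
    linear_combination hN + 2 * hcd

end Realizable

section Avoidable

variable {α V K : Type*} {H : SimpleGraph α} {k m n : ℕ}

/-- Some Gallai `k`-colouring of the complete graph on `n` vertices has no monochromatic `H`. -/
def IsGallaiAvoidable (k : ℕ) (H : SimpleGraph α) (n : ℕ) : Prop :=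
  ∃ χ : Fin n → Fin n → Fin k, (∀ x y, χ x y = χ y x) ∧ NoRainbowTriangle ⊤ χ ∧
    ¬ IsMonoCopy ⊤ χ H

theorem isGallaiAvoidable_of_free [Fintype V] {χ : V → V → Fin k} (hχ : IsGallaiColoring χ)
    (hfree : ∀ i, H.Free (colorClass χ i)) (hn : n ≤ Fintype.card V) :
    IsGallaiAvoidable k H n := by
  obtain ⟨f⟩ := Function.Embedding.nonempty_of_card_le (α := Fin n) (by simpa)
  have hχf := hχ.comap f
  refine ⟨_, hχf.symm, hχf.noRainbowTriangle, fun h => ?_⟩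
  obtain ⟨i, hi⟩ := (isMonoCopy_top_iff hχf.symm).1 h
  rw [colorClass_comap] at hi
  exact hfree i (hi.trans ⟨(Embedding.comap f _).toCopy⟩)

theorem IsGallaiAvoidable.anti (h : IsGallaiAvoidable k H n) (hm : m ≤ n) :
    IsGallaiAvoidable k H m := by
  obtain ⟨χ, hsymm, hχ, hH⟩ := h
  exact isGallaiAvoidable_of_free ⟨hsymm, hχ⟩
    (fun i hi => hH ((isMonoCopy_top_iff hsymm).2 ⟨i, hi⟩)) (by simpa)

theorem IsRealizable.isGallaiAvoidable {F : Finset (Fin k)} {N : ℕ} (hH : H ≠ ⊥)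
    (h : IsRealizable H m F ∅ N) (hn : n ≤ N) : IsGallaiAvoidable k H n := by
  obtain ⟨V, _, χ, hχ, rfl, hfree, -, hbot⟩ := h
  refine isGallaiAvoidable_of_free hχ (fun i => ?_) hn
  by_cases hi : i ∈ F
  · exact hfree i hi
  · rw [hbot i (by simpa)]
    exact free_bot hH

/- Ramsey's theorem ensures that the infimum defining `GallaiRamsey` is not taken over the empty
set, where it would have the junk value `0`. -/
theorem exists_isNClique_colorClass [Finite K] (r : K → ℕ) :
    ∃ M, ∀ {V : Type*} {χ : V → V → K}, (∀ x y, χ x y = χ y x) → ∀ S : Finset V, M ≤ S.card →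
      ∃ i, ∃ T ⊆ S, (colorClass χ i).IsNClique (r i) T := by
  classical
  have := Fintype.ofFinite K
  induction r using WellFoundedLT.induction with | ind r ih =>
  by_cases hr : ∃ i, r i = 0
  · obtain ⟨i, hi⟩ := hr
    exact ⟨0, fun _ _ _ => ⟨i, ∅, by simp, by simp [hi]⟩⟩
  push Not at hr
  choose M hM using fun i =>
    ih (Function.update r i (r i - 1)) (update_lt_self_iff.2 (Nat.pred_lt (hr i)))
  refine ⟨∑ i, M i + 1, fun {V χ} hχ S hS => ?_⟩
  obtain ⟨v, hv⟩ := Finset.card_pos.1 (by omega : 0 < S.card)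
  have hsum : ∑ i, M i ≤ ∑ i, {u ∈ S.erase v | χ v u = i}.card := by
    have := Finset.card_eq_sum_card_fiberwise (s := S.erase v) (f := χ v) (t := Finset.univ)
      fun _ _ => Finset.mem_univ _
    rw [← this, Finset.card_erase_of_mem hv]
    omega
  obtain ⟨i, -, hi⟩ := Finset.exists_le_of_sum_le ⟨χ v v, Finset.mem_univ _⟩ hsum
  obtain ⟨j, T, hTS, hT⟩ := hM i hχ _ hi
  have hT' {u} (hu : u ∈ T) : (u ≠ v ∧ u ∈ S) ∧ χ v u = i := by simpa using hTS hu
  obtain rfl | hji := eq_or_ne j i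
  · refine ⟨j, insert v T, Finset.insert_subset hv fun u hu => (hT' hu).1.2, ?_⟩
    rw [Function.update_self] at hT
    have := hT.insert fun u hu => (colorClass_adj hχ).2 ⟨(hT' hu).1.1.symm, (hT' hu).2⟩
    rwa [Nat.sub_add_cancel (Nat.pos_of_ne_zero (hr j))] at this
  · rw [Function.update_of_ne hji] at hT
    exact ⟨j, T, fun u hu => (hT' hu).1.2, hT⟩

theorem exists_not_isGallaiAvoidable [Finite α] (k : ℕ) (H : SimpleGraph α) :
    ∃ n, ¬ IsGallaiAvoidable k H n := by
  have := Fintype.ofFinite α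
  obtain ⟨M, hM⟩ := exists_isNClique_colorClass fun _ : Fin k => Fintype.card α
  refine ⟨M, fun ⟨χ, hsymm, _, hH⟩ => hH ((isMonoCopy_top_iff hsymm).2 ?_)⟩
  obtain ⟨i, T, -, hT⟩ := hM hsymm Finset.univ (by simp)
  have hcontained : (⊤ : SimpleGraph α) ⊑ colorClass χ i := by
    by_contra hfree
    exact cliqueFree_iff_top_free.2 hfree T hT
  exact ⟨i, (IsContained.of_le le_top).trans hcontained⟩

theorem IsGallaiAvoidable.lt_gallaiRamsey [Finite α] (h : IsGallaiAvoidable k H n) :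
    n < GallaiRamsey k H := by
  have hne : {N | ∀ χ : Fin N → Fin N → Fin k, (∀ x y, χ x y = χ y x) →
      NoRainbowTriangle ⊤ χ → IsMonoCopy ⊤ χ H}.Nonempty := by
    obtain ⟨N, hN⟩ := exists_not_isGallaiAvoidable k H
    exact ⟨N, fun χ hsymm hχ => by_contra fun hmono => hN ⟨χ, hsymm, hχ, hmono⟩⟩
  by_contra! hle
  obtain ⟨χ, hsymm, hχ, hmono⟩ := h.anti hle
  exact hmono (Nat.sInf_mem hne χ hsymm hχ)

theorem exists_coloring_ramsey2_sub_one [Nonempty α] (H : SimpleGraph α) :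
    ∃ χ : Fin (Ramsey2 H - 1) → Fin (Ramsey2 H - 1) → Fin 2, (∀ x y, χ x y = χ y x) ∧
      ¬ IsMonoCopy ⊤ χ H := by
  obtain h | h := Nat.eq_zero_or_pos (Ramsey2 H)
  · exact ⟨fun _ _ => 0, fun _ _ => rfl, fun ⟨f, _⟩ =>
      absurd (f (Classical.arbitrary α)).pos (by omega)⟩
  · by_contra! hall
    exact Nat.notMem_of_lt_sInf (Nat.sub_one_lt h.ne') hall

theorem isRealizable_of_coloring {χ : Fin n → Fin n → Fin 2} (hχ : ∀ x y, χ x y = χ y x)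
    (hH : ¬ IsMonoCopy ⊤ χ H) {p q : Fin k} (hpq : p ≠ q) : IsRealizable H m {p, q} ∅ n := by
  rw [isMonoCopy_top_iff hχ, not_exists] at hH
  have hcompl : (colorClass χ 0)ᶜ = colorClass χ 1 := by
    ext x y
    simp only [compl_adj, colorClass_adj hχ]
    grind
  simpa using isRealizable_of_free_compl (m := m) hpq (hH 0) (hcompl ▸ hH 1)

theorem isGallaiAvoidable_of_coloring {c d : ℕ} (hk : 3 ≤ k) (hm : 2 ≤ m) (hH : H.Connected)
    (hmH : kipasG m ⊑ H)
    (hcd : (m % 4 = 0 ∧ c = m - 2 ∧ d = m - 4) ∨ (m % 4 = 2 ∧ c = m - 1 ∧ d = m - 2))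
    (h2 : ∃ χ : Fin n → Fin n → Fin 2, (∀ x y, χ x y = χ y x) ∧ ¬ IsMonoCopy ⊤ χ H) :
    IsGallaiAvoidable k H
      (2 * n + 10 * c * (5 ^ ((k - 3) / 2) - 1) - 2 * d * (k - 3)) := by
  obtain ⟨χ, hχ, hmono⟩ := h2
  set t := (k - 3) / 2
  have hsparse (p q : Fin k) (hpq : p ≠ q) : IsRealizable H m ∅ {p, q} c := by
    have : NeZero c := ⟨by omega⟩
    obtain ⟨G, hG, hG'⟩ := exists_isSparse_isSparse_compl (m := m) (c := c)
      (w := if m % 4 = 0 then m / 4 - 1 else m / 4) (by omega) (by grind) (by grind)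
    simpa using isRealizable_of_isSparse_compl hpq hG hG'
  obtain ⟨B, -, hB⟩ := Finset.exists_subset_card_eq (s := (Finset.univ : Finset (Fin k)))
    (n := 2 * (t + 1) + 1) (by simp; omega)
  obtain ⟨a, F, ha, rfl, hF⟩ := Finset.card_eq_succ.1 hB
  obtain ⟨N, hN, h⟩ := exists_isRealizable_add_eq (d := d) hH hmH hm hsparse
    (fun _ _ => isRealizable_of_coloring hχ hmono) (Nat.even_iff.2 (by omega)) (by omega) hF
  have hne : H ≠ ⊥ := by
    obtain ⟨f⟩ := hmH
    exact ne_bot_iff_exists_adj.2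
      ⟨_, _, f.toHom.map_adj (kipasG_adj_zero_succ ⟨0, by omega⟩)⟩
  refine (h.double hH hmH hm (by simpa)).isGallaiAvoidable hne ?_
  have hle : 2 * d * (2 * t) ≤ 2 * d * (k - 3) := Nat.mul_le_mul_left _ (by omega)
  have h10 : 10 * c * (5 ^ t - 1) = 2 * (5 * c * (5 ^ t - 1)) := by ring
  have h4 : 2 * d * (2 * t) = 2 * (2 * d * t) := by ring
  omega

end Avoidable

section Wheel

theorem kipasG_le_wheelG (m : ℕ) : kipasG m ≤ wheelG m := by
  intro a b
  simp only [kipasG, wheelG, fromRel_adj]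
  tauto

theorem wheelG_connected (m : ℕ) : (wheelG m).Connected := by
  refine connected_iff_exists_forall_reachable _ |>.2 ⟨0, Fin.cases .rfl fun j => ?_⟩
  exact (kipasG_le_wheelG m (kipasG_adj_zero_succ j)).reachable

end Wheel

end GallaiRamsey

open GallaiRamsey in
theorem wheel_gallai_lower_odd_k_general {α : Type*} [Finite α] {H : SimpleGraph α} {k m n c d : ℕ}
    (hk : 3 ≤ k) (hm : 2 ≤ m) (hH : H.Connected) (hmH : kipasG m ⊑ H)
    (hcd : (m % 4 = 0 ∧ c = m - 2 ∧ d = m - 4) ∨ (m % 4 = 2 ∧ c = m - 1 ∧ d = m - 2))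
    (h2 : ∃ χ : Fin n → Fin n → Fin 2, (∀ x y, χ x y = χ y x) ∧ ¬ IsMonoCopy ⊤ χ H) :
    IsGallaiAvoidable k H (2 * n + 10 * c * (5 ^ ((k - 3) / 2) - 1) - 2 * d * (k - 3)) ∧
      2 * (Ramsey2 H + 5 * c * (5 ^ ((k - 3) / 2) - 1) - d * (k - 3)) - 1 ≤
        GallaiRamsey k H := by
  refine ⟨isGallaiAvoidable_of_coloring hk hm hH hmH hcd h2, ?_⟩
  have := hH.nonempty
  have hlt := (isGallaiAvoidable_of_coloring hk hm hH hmH hcd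
    (exists_coloring_ramsey2_sub_one H)).lt_gallaiRamsey
  rw [show 10 * c = 2 * (5 * c) by ring, mul_assoc, mul_assoc 2 d] at hlt
  omega

/-- Odd `k ≥ 5`, even `m ≥ 6`: from a 2-coloring of `K_n` with no monochromatic
wheel `W_m`, one gets a Gallai `k`-coloring of a larger complete graph with no
monochromatic `W_m`; consequently the Gallai–Ramsey lower bound. -/
theorem wheel_gallai_lower_odd_k (k m n c d : ℕ) (hk : 5 ≤ k) (hko : k % 2 = 1)
    (hm : 6 ≤ m) (hme : m % 2 = 0)
    (hcd : (m % 4 = 0 ∧ c = m - 2 ∧ d = m - 4) ∨ (m % 4 = 2 ∧ c = m - 1 ∧ d = m - 2))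
    (h2 : ∃ χ : Fin n → Fin n → Fin 2, (∀ x y, χ x y = χ y x) ∧
      ¬ IsMonoCopy (⊤ : SimpleGraph (Fin n)) χ (wheelG m)) :
    (∃ χ : Fin (2 * n + 10 * c * (5 ^ ((k - 3) / 2) - 1) - 2 * d * (k - 3)) →
        Fin (2 * n + 10 * c * (5 ^ ((k - 3) / 2) - 1) - 2 * d * (k - 3)) → Fin k,
      (∀ x y, χ x y = χ y x) ∧
      NoRainbowTriangle (⊤ : SimpleGraph (Fin (2 * n + 10 * c * (5 ^ ((k - 3) / 2) - 1) - 2 * d * (k - 3)))) χ ∧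
      ¬ IsMonoCopy (⊤ : SimpleGraph (Fin (2 * n + 10 * c * (5 ^ ((k - 3) / 2) - 1) - 2 * d * (k - 3)))) χ (wheelG m)) ∧
    2 * (Ramsey2 (wheelG m) + 5 * c * (5 ^ ((k - 3) / 2) - 1) - d * (k - 3)) - 1 ≤
      GallaiRamsey k (wheelG m) :=
  wheel_gallai_lower_odd_k_general (by omega) (by omega) (GallaiRamsey.wheelG_connected m)
    (.of_le (GallaiRamsey.kipasG_le_wheelG m)) hcd h2
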